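/- Let C be a category with finite products and X a projection-coextensive object of C. Suppose (a_i : X → A_i)_{i∈I} and (b_j : X → B_j)_{j∈J} are two product diagrams for X indexed by finite types I and J, in which every A_i and every B_j is directly-irreducible. Then there exists a bijection σ : I → J and isomorphisms f_i : A_i → B_{σ(i)} such that f_i∘a_i = b_{σ(i)} for every i ∈ I. -/

import Mathlib

open CategoryTheory CategoryTheory.Limits

universe v u

variable {C : Type u} [Category.{v} C]

/-- `(p, q)` is a binary product diagram, exhibiting `X` as the product of `A` and `B`. -/
def IsBinaryProduct {X A B : C} (p : X ⟶ A) (q : X ⟶ B) : Prop :=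
  Nonempty (IsLimit (BinaryFan.mk p q))

/-- `p : X ⟶ A` is a product projection. -/
def IsProductProjection {X A : C} (p : X ⟶ A) : Prop :=
  ∃ (B : C) (q : X ⟶ B), IsBinaryProduct p q

/-- A pushout square whose two legs belong to the class `M`. -/
def IsMPushout (M : MorphismProperty C) {Z A B P : C}
    (f : Z ⟶ A) (g : Z ⟶ B) (a : A ⟶ P) (b : B ⟶ P) : Prop :=
  IsPushout f g a b ∧ M a ∧ M b

/-- `X` is an `M`-coextensive object. -/
structure MCoextensive (M : MorphismProperty C) (X : C) : Prop where
  pushout_exists : ∀ ⦃Y A : C⦄ (m : X ⟶ Y) (p : X ⟶ A), M m → IsProductProjection p →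
    ∃ (P : C) (a : A ⟶ P) (b : Y ⟶ P), IsMPushout M p m a b
  isBinaryProduct_iff : ∀ ⦃A₁ A₂ Y B₁ B₂ : C⦄ (π₁ : X ⟶ A₁) (π₂ : X ⟶ A₂)
    (f : X ⟶ Y) (p₁ : A₁ ⟶ B₁) (p₂ : A₂ ⟶ B₂) (π₁' : Y ⟶ B₁) (π₂' : Y ⟶ B₂),
    IsBinaryProduct π₁ π₂ → M f → M p₁ → M p₂ →
    π₁ ≫ p₁ = f ≫ π₁' → π₂ ≫ p₂ = f ≫ π₂' →
    (IsBinaryProduct π₁' π₂' ↔ (IsMPushout M π₁ f p₁ π₁' ∧ IsMPushout M π₂ f p₂ π₂'))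

/-- The class of product projections. -/
def projections (C : Type u) [Category.{v} C] : MorphismProperty C :=
  fun _ _ f => IsProductProjection f

/-- `X` is projection-coextensive. -/
def ProjectionCoextensive (X : C) : Prop := MCoextensive (projections C) X

/-- `f` is a regular epimorphism (a coequalizer of some parallel pair). -/
def IsRegularEpimorphism {X Y : C} (f : X ⟶ Y) : Prop :=
  ∃ (W : C) (a b : W ⟶ X) (h : a ≫ f = b ≫ f), Nonempty (IsColimit (Cofork.ofπ f h))

/-- The class of regular epimorphisms. -/
def regularEpis (C : Type u) [Category.{v} C] : MorphismProperty C :=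
  fun _ _ f => IsRegularEpimorphism f

/-- `X` is regularly-coextensive. -/
def RegularlyCoextensive (X : C) : Prop := MCoextensive (regularEpis C) X

/-- A regular category: finitely complete, coequalizers of kernel pairs, and
regular epimorphisms are stable under pullback. -/
class IsRegularCategory (C : Type u) [Category.{v} C] [HasFiniteLimits C] : Prop where
  hasCoequalizer_kernelPair : ∀ {X Y : C} (f : X ⟶ Y),
    HasCoequalizer (pullback.fst f f) (pullback.snd f f)
  regularEpi_stable : ∀ {X Y Z : C} (f : X ⟶ Y) (g : Z ⟶ Y),
    IsRegularEpimorphism f → IsRegularEpimorphism (pullback.snd f g)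

/-- `X` has global support: the unique morphism to the terminal object is a regular epi. -/
def HasGlobalSupport [HasTerminal C] (X : C) : Prop :=
  IsRegularEpimorphism (terminal.from X)

/-- An object `A` is directly-irreducible if it is not terminal and in every binary
product diagram on `A` one of the projections is an isomorphism. -/
def DirectlyIrreducible {C : Type u} [Category.{v} C] (A : C) : Prop :=
  ¬ Nonempty (IsTerminal A) ∧
    ∀ ⦃P Q : C⦄ (p : A ⟶ P) (q : A ⟶ Q), IsBinaryProduct p q → IsIso p ∨ IsIso q

/-!
Product projections out of a projection-coextensive object `X` behave like direct factors in a
coextensive category: the pushout of the two projections of `X ≅ P × Q` is terminal, and pushing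
out `X ≅ P × Q` along a projection `a : X ⟶ A` splits `A`. Hence a projection onto a
directly-irreducible `A` factors through exactly one of `P` and `Q`.

Given `X ≅ A × A'` and `X ≅ ∏ B j`, not every `b j` can factor through `A'`: otherwise `A'` would
map back to `X` compatibly with all `b j`, and `a` would factor through `A'` as well as through
itself. So some `b j` factors through `a`, by an isomorphism since `A` is irreducible. This `j` is
unique: if `b j'` factored through `b j` with `j ≠ j'`, then `(b j', 𝟙 X)` would be a product
diagram, and `b j'` would factor through both of its members.
-/

namespace IsBinaryProduct

variable {X P Q : C} {p : X ⟶ P} {q : X ⟶ Q}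

lemma symm (h : IsBinaryProduct p q) : IsBinaryProduct q p :=
  h.map BinaryFan.isLimitFlip

lemma isProductProjection_fst (h : IsBinaryProduct p q) : IsProductProjection p :=
  ⟨Q, q, h⟩

lemma isProductProjection_snd (h : IsBinaryProduct p q) : IsProductProjection q :=
  h.symm.isProductProjection_fst

lemma id_terminal [HasTerminal C] (X : C) : IsBinaryProduct (𝟙 X) (terminal.from X) :=
  (BinaryFan.isLimit_iff_isIso_fst terminalIsTerminal _).2 (inferInstanceAs (IsIso (𝟙 X)))

lemma of_isLimit_fan {I : Type*} {A : I → C} {a : ∀ i, X ⟶ A i} (ha : IsLimit (Fan.mk X a))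
    (i : I) [HasProduct fun k : {k // k ≠ i} => A k] :
    IsBinaryProduct (a i) (Pi.lift fun k : {k // k ≠ i} => a k) := by
  classical
  have exists_lift {T : C} (f : T ⟶ A i) (g : T ⟶ ∏ᶜ fun k : {k // k ≠ i} => A k) :
      ∃ l : T ⟶ X, l ≫ a i = f ∧ ∀ k : {k // k ≠ i}, l ≫ a k = g ≫ Pi.π _ k :=
    let c (k : I) : T ⟶ A k :=
      if hk : k = i then f ≫ eqToHom (congrArg A hk.symm)
      else g ≫ Pi.π (fun k : {k // k ≠ i} => A k) ⟨k, hk⟩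
    ⟨Fan.IsLimit.lift ha c, (Fan.IsLimit.fac ha c i).trans (by simp [c]),
      fun k => (Fan.IsLimit.fac ha c k).trans (by simp [c, k.2])⟩
  choose lift lift_fst lift_snd using @exists_lift
  refine ⟨BinaryFan.IsLimit.mk _ lift lift_fst
    (fun f g => Pi.hom_ext _ _ fun k => by simp [lift_snd])
    fun f g m hf hg => Fan.IsLimit.hom_ext ha _ _ fun k => ?_⟩
  by_cases hk : k = i
  · subst hk
    exact hf.trans (lift_fst f g).symm
  · refine Eq.trans ?_ (lift_snd f g ⟨k, hk⟩).symm
    simp [← hg]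

end IsBinaryProduct

lemma IsProductProjection.of_isLimit_fan [HasFiniteProducts C] {X : C} {I : Type*} [Finite I]
    {A : I → C} {a : ∀ i, X ⟶ A i} (ha : IsLimit (Fan.mk X a)) (i : I) :
    IsProductProjection (a i) :=
  (IsBinaryProduct.of_isLimit_fan ha i).isProductProjection_fst

lemma MCoextensive.factors_fst_or_snd {M : MorphismProperty C} {X : C} (hX : MCoextensive M X)
    {P Q A : C} {p : X ⟶ P} {q : X ⟶ Q} (h : IsBinaryProduct p q) {a : X ⟶ A} (ha : M a)
    (hA : DirectlyIrreducible A) : (∃ g, p ≫ g = a) ∨ ∃ g, q ≫ g = a := by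
  obtain ⟨R, r, a₁, hR⟩ := hX.pushout_exists a p ha h.isProductProjection_fst
  obtain ⟨S, s, a₂, hS⟩ := hX.pushout_exists a q ha h.isProductProjection_snd
  have hRS : IsBinaryProduct a₁ a₂ :=
    (hX.isBinaryProduct_iff p q a r s a₁ a₂ h ha hR.2.1 hS.2.1 hR.1.w hS.1.w).2 ⟨hR, hS⟩
  rcases hA.2 _ _ hRS with _ | _
  · exact .inl ⟨r ≫ inv a₁, by rw [reassoc_of% hR.1.w, IsIso.hom_inv_id, Category.comp_id]⟩
  · exact .inr ⟨s ≫ inv a₂, by rw [reassoc_of% hS.1.w, IsIso.hom_inv_id, Category.comp_id]⟩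

namespace ProjectionCoextensive

variable [HasTerminal C] {X : C}

/- This is coextensivity for the diagram with top row `(p, q)`, bottom row `(𝟙 P, !)` and middle
vertical arrow `p`. -/
lemma isPushout_id_and_isPushout_terminal (hX : ProjectionCoextensive X) {P Q : C} {p : X ⟶ P}
    {q : X ⟶ Q} (h : IsBinaryProduct p q) :
    IsPushout p p (𝟙 P) (𝟙 P) ∧ IsPushout q p (terminal.from Q) (terminal.from P) := by
  obtain ⟨hl, hr⟩ := (hX.isBinaryProduct_iff p q p (𝟙 P) (terminal.from Q) (𝟙 P)
    (terminal.from P) h h.isProductProjection_fst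
    (IsBinaryProduct.id_terminal P).isProductProjection_fst
    (IsBinaryProduct.id_terminal Q).isProductProjection_snd rfl (Subsingleton.elim _ _)).1
    (IsBinaryProduct.id_terminal P)
  exact ⟨hl.1, hr.1⟩

lemma epi (hX : ProjectionCoextensive X) {P : C} {p : X ⟶ P} (hp : IsProductProjection p) :
    Epi p := by
  obtain ⟨Q, q, h⟩ := hp
  exact (epi_iff_isPushout p).2 (hX.isPushout_id_and_isPushout_terminal h).1

lemma isTerminal_of_factors_fst_of_factors_snd (hX : ProjectionCoextensive X) {P Q A : C}
    {p : X ⟶ P} {q : X ⟶ Q} (h : IsBinaryProduct p q) {a : X ⟶ A} [Epi a] {f : P ⟶ A}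
    (hf : p ≫ f = a) {g : Q ⟶ A} (hg : q ≫ g = a) : Nonempty (IsTerminal A) := by
  have hpo := (hX.isPushout_id_and_isPushout_terminal h).2
  have ha : a ≫ terminal.from A ≫ hpo.desc g f (hg.trans hf.symm) = a := by
    rw [← Category.assoc, Subsingleton.elim (a ≫ terminal.from A) (p ≫ terminal.from P),
      Category.assoc, hpo.inr_desc, hf]
  exact ⟨terminalIsTerminal.ofIso ⟨hpo.desc g f (hg.trans hf.symm), terminal.from A,
    Subsingleton.elim _ _, by rwa [← cancel_epi a, Category.comp_id]⟩⟩

lemma isIso_of_factors (hX : ProjectionCoextensive X) {A B : C} {a : X ⟶ A} {b : X ⟶ B}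
    (ha : IsProductProjection a) (hb : IsProductProjection b) (hA : DirectlyIrreducible A)
    (hB : ¬ Nonempty (IsTerminal B)) {g : A ⟶ B} (hg : a ≫ g = b) : IsIso g := by
  have := hX.epi ha
  have := hX.epi hb
  obtain ⟨R, r, h⟩ := hb
  rcases hX.factors_fst_or_snd h ha hA with ⟨k, hk⟩ | ⟨k, hk⟩
  · exact ⟨k, by rw [← cancel_epi a, reassoc_of% hg, hk, Category.comp_id],
      by rw [← cancel_epi b, reassoc_of% hk, hg, Category.comp_id]⟩
  · have hr : r ≫ k ≫ g = b := by rw [reassoc_of% hk, hg]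
    exact (hB (hX.isTerminal_of_factors_fst_of_factors_snd h (Category.comp_id b) hr)).elim

section Fan

variable {J : Type*} {B : J → C} {b : ∀ j, X ⟶ B j}

lemma exists_factors_of_isLimit_fan (hX : ProjectionCoextensive X) (hb : IsLimit (Fan.mk X b))
    (hb' : ∀ j, IsProductProjection (b j)) (hB : ∀ j, DirectlyIrreducible (B j)) {A : C}
    {a : X ⟶ A} (ha : IsProductProjection a) (hA : ¬ Nonempty (IsTerminal A)) :
    ∃ (j : J) (g : A ⟶ B j), a ≫ g = b j := by
  by_contra! hne
  have := hX.epi ha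
  obtain ⟨A', a', h⟩ := ha
  have hfac (j : J) : ∃ g, a' ≫ g = b j :=
    (hX.factors_fst_or_snd h (hb' j) (hB j)).resolve_left fun ⟨g, hg⟩ => hne j g hg
  choose g hg using hfac
  have hsplit : a' ≫ Fan.IsLimit.lift hb g = 𝟙 X := Fan.IsLimit.hom_ext hb _ _ fun j => by
    rw [Category.assoc, Fan.IsLimit.fac, hg, Category.id_comp, fan_mk_proj]
  have ha' : a' ≫ Fan.IsLimit.lift hb g ≫ a = a := by rw [reassoc_of% hsplit]
  exact hA (hX.isTerminal_of_factors_fst_of_factors_snd h (Category.comp_id a) ha')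

lemma exists_iso_of_isLimit_fan (hX : ProjectionCoextensive X) (hb : IsLimit (Fan.mk X b))
    (hb' : ∀ j, IsProductProjection (b j)) (hB : ∀ j, DirectlyIrreducible (B j)) {A : C}
    {a : X ⟶ A} (ha : IsProductProjection a) (hA : DirectlyIrreducible A) :
    ∃ (j : J) (e : A ≅ B j), a ≫ e.hom = b j := by
  obtain ⟨j, g, hg⟩ := hX.exists_factors_of_isLimit_fan hb hb' hB ha hA.1
  have := hX.isIso_of_factors ha (hb' j) hA (hB j).1 hg
  exact ⟨j, asIso g, hg⟩

lemma eq_of_factors_of_isLimit_fan (hX : ProjectionCoextensive X) (hb : IsLimit (Fan.mk X b))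
    {j j' : J} (hb' : IsProductProjection (b j')) (hB : ¬ Nonempty (IsTerminal (B j')))
    {g : B j ⟶ B j'} (hg : b j ≫ g = b j') : j = j' := by
  classical
  by_contra hne
  -- Replacing the `j'`-th component of `x` by `f` leaves the `j`-th one, which determines it.
  have hdet {T : C} (x : T ⟶ X) (f : T ⟶ B j') : f = x ≫ b j' := by
    let l : T ⟶ X := Fan.IsLimit.lift hb (Function.update (fun k => x ≫ b k) j' f)
    have hl (k : J) : l ≫ b k = Function.update (fun k => x ≫ b k) j' f k :=
      Fan.IsLimit.fac hb _ k
    calc f = l ≫ b j' := by rw [hl, Function.update_self]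
      _ = (l ≫ b j) ≫ g := by rw [Category.assoc, hg]
      _ = (x ≫ b j) ≫ g := by rw [hl, Function.update_of_ne hne]
      _ = x ≫ b j' := by rw [Category.assoc, hg]
  have hprod : IsBinaryProduct (b j') (𝟙 X) :=
    ⟨BinaryFan.isLimitMk (fun s => s.snd) (fun s => (hdet s.snd s.fst).symm)
      (fun s => Category.comp_id s.snd) fun s m _ hm => (Category.comp_id m).symm.trans hm⟩
  have := hX.epi hb'
  exact hB (hX.isTerminal_of_factors_fst_of_factors_snd hprod (Category.comp_id _)
    (Category.id_comp _))

end Fan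

end ProjectionCoextensive

theorem projectionCoextensive_unique_decomposition_general [HasTerminal C] {X : C}
    (hX : ProjectionCoextensive X) {I J : Type*} {A : I → C} {B : J → C}
    {a : ∀ i, X ⟶ A i} {b : ∀ j, X ⟶ B j}
    (ha : IsLimit (Fan.mk X a)) (hb : IsLimit (Fan.mk X b))
    (ha' : ∀ i, IsProductProjection (a i)) (hb' : ∀ j, IsProductProjection (b j))
    (hA : ∀ i, DirectlyIrreducible (A i)) (hB : ∀ j, DirectlyIrreducible (B j)) :
    ∃ (σ : I ≃ J) (e : ∀ i, A i ≅ B (σ i)), ∀ i, a i ≫ (e i).hom = b (σ i) := by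
  choose σ e he using fun i => hX.exists_iso_of_isLimit_fan hb hb' hB (ha' i) (hA i)
  have hσ_inj : Function.Injective σ := fun i i' hσ => by
    obtain ⟨g, hg⟩ : ∃ g : B (σ i) ⟶ A i', b (σ i) ≫ g = a i' := by
      rw [hσ]
      exact ⟨(e i').inv, by rw [← he, Category.assoc, Iso.hom_inv_id, Category.comp_id]⟩
    have hi : a i ≫ (e i).hom ≫ g = a i' := by rw [reassoc_of% he, hg]
    exact hX.eq_of_factors_of_isLimit_fan ha (ha' i') (hA i').1 hi
  have hσ_surj : Function.Surjective σ := fun j => by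
    obtain ⟨i, g, hg⟩ := hX.exists_factors_of_isLimit_fan ha ha' hA (hb' j) (hB j).1
    have hj : b j ≫ g ≫ (e i).hom = b (σ i) := by rw [reassoc_of% hg, he]
    exact ⟨i, (hX.eq_of_factors_of_isLimit_fan hb (hb' (σ i)) (hB (σ i)).1 hj).symm⟩
  exact ⟨.ofBijective σ ⟨hσ_inj, hσ_surj⟩, e, he⟩

/-- Uniqueness of direct decompositions of a projection-coextensive object into
directly-irreducible factors. -/
theorem projectionCoextensive_unique_decomposition
    {C : Type u} [Category.{v} C] [HasFiniteProducts C]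
    (X : C) (hX : ProjectionCoextensive X)
    (I J : Type) [Finite I] [Finite J]
    (A : I → C) (B : J → C) (a : ∀ i, X ⟶ A i) (b : ∀ j, X ⟶ B j)
    (ha : Nonempty (IsLimit (Fan.mk X a))) (hb : Nonempty (IsLimit (Fan.mk X b)))
    (hA : ∀ i, DirectlyIrreducible (A i)) (hB : ∀ j, DirectlyIrreducible (B j)) :
    ∃ (σ : I ≃ J) (e : ∀ i, A i ≅ B (σ i)), ∀ i, a i ≫ (e i).hom = b (σ i) :=
  projectionCoextensive_unique_decomposition_general hX ha.some hb.some
    (.of_isLimit_fan ha.some) (.of_isLimit_fan hb.some) hA hB
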